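/- Let ζ ∈ [0,1) and let x : ℝ → E be a GDAM trajectory on [0,t♯], i.e. x'(t) = s_ζ(x(t)) with ∇f(x(t)) ≠ 0 and ∇g(x(t)) ≠ 0 on [0,t♯]. Suppose g(x(t)) < 0 for all t ∈ [0,t♯) and g(x(t♯)) = 0. Then the derivative of t ↦ g(x(t)) at t♯ (from the left) is nonnegative, and consequently cos θ(x(t♯)) ≤ −ζ. -/

import Mathlib

open RealInnerProductSpace

/-!
Along a GDAM trajectory the chain rule gives
`(g ∘ x)' = ⟪s_ζ(x), ∇ g(x)⟫ = -‖∇ g(x)‖ (cos θ(x) + ζ)`. When `g ∘ x` reaches a value from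
below, its left difference quotients are nonnegative, hence so is this derivative; dividing by
`‖∇ g(x)‖ > 0` leaves `cos θ(x) ≤ -ζ`.
-/

section OneSidedDerivative

open Filter Topology

theorem hasDerivWithinAt_nonneg_of_frequently_le {φ : ℝ → ℝ} {φ' b : ℝ} {s : Set ℝ}
    (hφ : HasDerivWithinAt φ φ' s b) (hle : ∃ᶠ t in 𝓝[<] b, t ∈ s ∧ φ t ≤ φ b) : 0 ≤ φ' := by
  have hslope : ∃ᶠ t in 𝓝[s \ {b}] b, 0 ≤ slope φ b t := by
    rw [frequently_nhdsWithin_iff] at hle ⊢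
    refine hle.mono fun t ⟨⟨hts, hφt⟩, htb⟩ => ⟨?_, hts, htb.ne⟩
    rw [slope_def_field]
    exact div_nonneg_of_nonpos (sub_nonpos.2 hφt) (sub_nonpos.2 htb.le)
  exact ge_of_tendsto_of_frequently (hasDerivWithinAt_iff_tendsto_slope.1 hφ) hslope

end OneSidedDerivative

section GDAM

open Filter Gradient InnerProductGeometry Topology

variable {E : Type*} [NormedAddCommGroup E] [InnerProductSpace ℝ E]

theorem norm_mul_cos_angle_eq_inner_normalize (u v : E) :
    ‖v‖ * Real.cos (angle u v) = ⟪NormedSpace.normalize u, v⟫ := by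
  rcases eq_or_ne v 0 with rfl | hv
  · simp
  · have hnorm : ‖v‖ ≠ 0 := norm_ne_zero_iff.2 hv
    rw [cos_angle, NormedSpace.normalize, real_inner_smul_left]
    field_simp

theorem inner_neg_normalize_sub_smul_normalize (u v : E) (ζ : ℝ) :
    ⟪-NormedSpace.normalize u - ζ • NormedSpace.normalize v, v⟫ =
      -(‖v‖ * (Real.cos (angle u v) + ζ)) := by
  have hself : ⟪NormedSpace.normalize v, v⟫ = ‖v‖ := by
    rw [NormedSpace.normalize, real_inner_smul_left, real_inner_self_eq_norm_mul_norm, ← mul_assoc,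
      inv_mul_mul_self]
  rw [inner_sub_left, inner_neg_left, real_inner_smul_left, hself,
    ← norm_mul_cos_angle_eq_inner_normalize]
  ring

variable [CompleteSpace E]

theorem hasDerivWithinAt_comp_of_gradient_ne_zero {g : E → ℝ} {x : ℝ → E} {x' : E} {s : Set ℝ}
    {t : ℝ} (hg : ∇ g (x t) ≠ 0) (hx : HasDerivWithinAt x x' s t) :
    HasDerivWithinAt (fun τ => g (x τ)) ⟪x', ∇ g (x t)⟫ s t := by
  have hdiff : DifferentiableAt ℝ g (x t) :=
    not_imp_comm.1 gradient_eq_zero_of_not_differentiableAt hg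
  rw [real_inner_comm]
  exact hdiff.hasGradientAt.hasFDerivAt.comp_hasDerivWithinAt t hx

/-- The GDAM vector field `s_ζ`. It is meaningful only where both gradients are nonzero: a
vanishing gradient contributes the junk value `NormedSpace.normalize 0 = 0`. -/
noncomputable def gdamField (f g : E → ℝ) (ζ : ℝ) (y : E) : E :=
  -NormedSpace.normalize (∇ f y) - ζ • NormedSpace.normalize (∇ g y)

/-- `x` solves the GDAM equation `x' = s_ζ(x)` at time `t`, inside the domain of `s_ζ`. The
derivative is taken within `s`, so that one-sided solutions (`s = Set.Iic t`) are covered too. -/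
structure IsGDAMTrajectoryWithinAt (f g : E → ℝ) (ζ : ℝ) (x : ℝ → E) (s : Set ℝ) (t : ℝ) :
    Prop where
  gradient_objective_ne_zero : ∇ f (x t) ≠ 0
  gradient_constraint_ne_zero : ∇ g (x t) ≠ 0
  hasDerivWithinAt : HasDerivWithinAt x (gdamField f g ζ (x t)) s t

variable {f g : E → ℝ} {ζ : ℝ} {x : ℝ → E} {s : Set ℝ} {t : ℝ}

theorem IsGDAMTrajectoryWithinAt.hasDerivWithinAt_constraint
    (hx : IsGDAMTrajectoryWithinAt f g ζ x s t) :
    HasDerivWithinAt (fun τ => g (x τ))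
      (-(‖∇ g (x t)‖ * (Real.cos (angle (∇ f (x t)) (∇ g (x t))) + ζ))) s t := by
  rw [← inner_neg_normalize_sub_smul_normalize]
  exact hasDerivWithinAt_comp_of_gradient_ne_zero hx.gradient_constraint_ne_zero hx.hasDerivWithinAt

theorem gdam_solution_point_cos_general (hx : IsGDAMTrajectoryWithinAt f g ζ x s t)
    (hle : ∃ᶠ τ in 𝓝[<] t, τ ∈ s ∧ g (x τ) ≤ g (x t)) :
    0 ≤ derivWithin (fun τ => g (x τ)) s t ∧
      Real.cos (angle (∇ f (x t)) (∇ g (x t))) ≤ -ζ := by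
  have hderiv := hx.hasDerivWithinAt_constraint
  refine ⟨hasDerivWithinAt_nonneg_of_frequently_le
    hderiv.differentiableWithinAt.hasDerivWithinAt hle, ?_⟩
  have hnorm : 0 < ‖∇ g (x t)‖ := norm_pos_iff.2 hx.gradient_constraint_ne_zero
  have hcos := nonpos_of_mul_nonpos_right
    (neg_nonneg.1 (hasDerivWithinAt_nonneg_of_frequently_le hderiv hle)) hnorm
  linarith

end GDAM

/-- at a solution point (first intersection with the constraint
boundary) the derivative of `t ↦ g(x(t))` is nonnegative and consequently
`cos θ(x(t♯)) ≤ -ζ`. -/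
theorem gdam_solution_point_cos {n : ℕ}
    (f g : EuclideanSpace ℝ (Fin n) → ℝ)
    (hf : ContDiff ℝ 2 f) (hg : ContDiff ℝ 2 g)
    (ζ : ℝ) (hζ : ζ ∈ Set.Ico (0 : ℝ) 1)
    (tsharp : ℝ) (ht : 0 < tsharp)
    (x : ℝ → EuclideanSpace ℝ (Fin n))
    (hgf : ∀ t ∈ Set.Icc (0 : ℝ) tsharp, gradient f (x t) ≠ 0)
    (hgg : ∀ t ∈ Set.Icc (0 : ℝ) tsharp, gradient g (x t) ≠ 0)
    (hx : ∀ t ∈ Set.Icc (0 : ℝ) tsharp, HasDerivAt x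
      (-(‖gradient f (x t)‖⁻¹ • gradient f (x t))
        - ζ • (‖gradient g (x t)‖⁻¹ • gradient g (x t))) t)
    (hneg : ∀ t ∈ Set.Ico (0 : ℝ) tsharp, g (x t) < 0)
    (hzero : g (x tsharp) = 0) :
    0 ≤ deriv (fun t => g (x t)) tsharp ∧
      ⟪gradient f (x tsharp), gradient g (x tsharp)⟫ /
        (‖gradient f (x tsharp)‖ * ‖gradient g (x tsharp)‖) ≤ -ζ := by
  have hmem : tsharp ∈ Set.Icc 0 tsharp := Set.right_mem_Icc.2 ht.le
  have hle := Filter.Eventually.frequently <| Filter.mem_of_superset (Ico_mem_nhdsLT ht)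
    fun t htI => And.intro (Set.mem_univ t) ((hneg t htI).le.trans_eq hzero.symm)
  simpa only [derivWithin_univ, InnerProductGeometry.cos_angle] using
    gdam_solution_point_cos_general
      ⟨hgf tsharp hmem, hgg tsharp hmem, (hx tsharp hmem).hasDerivWithinAt⟩ hle
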